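/- Let (𝖩_n) be a sequence of integral convex polygons in ℝ² whose perimeters tend to infinity and such that p(𝖩_n)^{-1} 𝖩_n converges in the Hausdorff metric to a convex domain 𝖩_∞ (with nonempty interior). Then the number of faces satisfies card(ℱ(𝖩_n)) = o(p(𝖩_n)). -/

import Mathlib

open Set MeasureTheory Metric Filter Topology Pointwise

/-- The lattice points of the plane. -/
def IsLatticePt (x : EuclideanSpace ℝ (Fin 2)) : Prop := ∀ i, ∃ n : ℤ, x i = (n : ℝ)

/-- Perimeter: the 1-dimensional Hausdorff measure of the boundary. -/
noncomputable def per (J : Set (EuclideanSpace ℝ (Fin 2))) : ℝ :=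
  (μH[1] (frontier J)).toReal

/-- An extreme point of `J` that is a positively weighted mean of two points of `J` equals the
first of them; the weights need not add up to one. -/
theorem eq_of_mem_extremePoints_of_combo {E : Type*} [AddCommGroup E] [Module ℝ E]
    {J : Set E} {p y z : E} (hp : p ∈ J.extremePoints ℝ) (hy : y ∈ J) (hz : z ∈ J)
    {a b : ℝ} (ha : 0 < a) (hb : 0 < b) (h : a • y + b • z = (a + b) • p) : y = p := by
  have hab : 0 < a + b := by positivity
  refine hp.2 hy hz ⟨a / (a + b), b / (a + b), by positivity, by positivity, by field_simp, ?_⟩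
  rw [div_eq_inv_mul, div_eq_inv_mul, mul_smul, mul_smul, ← smul_add, h, smul_smul,
    inv_mul_cancel₀ hab.ne', one_smul]

/-- A chord of `J` between two extreme points is maximal: a parallel chord of the same length on
the same line coincides with it. -/
theorem shift_eq_zero_of_extremePoints {E : Type*} [AddCommGroup E] [Module ℝ E]
    {J : Set E} {p q d : E} (hd : d ≠ 0) (hp : p ∈ J.extremePoints ℝ)
    (hpd : p + d ∈ J.extremePoints ℝ) (hq : q ∈ J) (hqd : q + d ∈ J) {s : ℝ}
    (h : p = q + s • d) : s = 0 := by
  rcases lt_trichotomy s 0 with hs | hs | hs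
  · have h1 : p = p + d := by
      refine eq_of_mem_extremePoints_of_combo hpd hp.1 hqd (neg_pos.2 hs) one_pos ?_
      rw [h]; module
    exact absurd (by simpa using h1) hd
  · exact hs
  · have h1 : p + d = p := by
      refine eq_of_mem_extremePoints_of_combo hp hpd.1 hq hs one_pos ?_
      rw [h]; module
    exact absurd (by simpa using h1) hd

/-- The determinant of two plane vectors. -/
noncomputable def planeDet (d p : EuclideanSpace ℝ (Fin 2)) : ℝ := d 0 * p 1 - d 1 * p 0

theorem exists_eq_add_smul_of_planeDet_eq {d p q : EuclideanSpace ℝ (Fin 2)} (hd : d ≠ 0)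
    (h : planeDet d p = planeDet d q) : ∃ s : ℝ, p = q + s • d := by
  unfold planeDet at h
  have hn : d 0 * d 0 + d 1 * d 1 ≠ 0 := by
    intro h0
    apply hd
    ext i
    fin_cases i
    · simp; nlinarith [mul_self_nonneg (d 0), mul_self_nonneg (d 1)]
    · simp; nlinarith [mul_self_nonneg (d 0), mul_self_nonneg (d 1)]
  refine ⟨((p 0 - q 0) * d 0 + (p 1 - q 1) * d 1) / (d 0 * d 0 + d 1 * d 1), ?_⟩
  ext i
  fin_cases i
  · simp
    rw [div_mul_eq_mul_div, ← sub_eq_iff_eq_add', eq_div_iff hn]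
    linear_combination (-d 1) * h
  · simp
    rw [div_mul_eq_mul_div, ← sub_eq_iff_eq_add', eq_div_iff hn]
    linear_combination (d 0) * h

theorem planeDet_injOn_chords {J : Set (EuclideanSpace ℝ (Fin 2))}
    {d p q : EuclideanSpace ℝ (Fin 2)} (hd : d ≠ 0)
    (hp : p ∈ J.extremePoints ℝ) (hpd : p + d ∈ J.extremePoints ℝ)
    (hq : q ∈ J) (hqd : q + d ∈ J) (h : planeDet d p = planeDet d q) : p = q := by
  obtain ⟨s, hs⟩ := exists_eq_add_smul_of_planeDet_eq hd h
  have := shift_eq_zero_of_extremePoints hd hp hpd hq hqd hs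
  simpa [this] using hs

theorem not_three_ordered_chords {J : Set (EuclideanSpace ℝ (Fin 2))} (hJ : Convex ℝ J)
    {d p q r : EuclideanSpace ℝ (Fin 2)} (hd : d ≠ 0)
    (hp : p ∈ J) (hpd : p + d ∈ J)
    (hq : q ∈ J.extremePoints ℝ) (hqd : q + d ∈ J.extremePoints ℝ)
    (hr : r ∈ J) (hrd : r + d ∈ J)
    (hpq : planeDet d p < planeDet d q) (hqr : planeDet d q < planeDet d r) : False := by
  have hpr := hpq.trans hqr
  set a := (planeDet d r - planeDet d q) / (planeDet d r - planeDet d p) with ha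
  set b := (planeDet d q - planeDet d p) / (planeDet d r - planeDet d p) with hb
  have hne : planeDet d r - planeDet d p ≠ 0 := (sub_pos.2 hpr).ne'
  have ha0 : 0 < a := div_pos (sub_pos.2 hqr) (sub_pos.2 hpr)
  have hb0 : 0 < b := div_pos (sub_pos.2 hpq) (sub_pos.2 hpr)
  have hab : a + b = 1 := by rw [ha, hb]; field_simp; ring
  have hm : a • p + b • r ∈ J := hJ hp hr ha0.le hb0.le hab
  have hmd : a • p + b • r + d ∈ J := by
    have h := hJ hpd hrd ha0.le hb0.le hab
    convert h using 1
    have : d = (a + b) • d := by rw [hab, one_smul]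
    nth_rewrite 1 [this]
    module
  have hdet : planeDet d q = planeDet d (a • p + b • r) := by
    have h1 : planeDet d (a • p + b • r) = a * planeDet d p + b * planeDet d r := by
      simp [planeDet]; ring
    rw [h1, ha, hb]; field_simp; ring
  have hqm := planeDet_injOn_chords hd hq hqd hm hmd hdet
  have hpq' : p = q := by
    refine eq_of_mem_extremePoints_of_combo hq hp hr ha0 hb0 ?_
    rw [hab, one_smul, ← hqm]
  rw [hpq'] at hpq
  exact lt_irrefl _ hpq

/-- At most two translates of a given nonzero segment join two extreme points of a convex set. -/
theorem card_chords_le_two {J : Set (EuclideanSpace ℝ (Fin 2))} (hJ : Convex ℝ J)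
    {d : EuclideanSpace ℝ (Fin 2)} (hd : d ≠ 0) (B : Finset (EuclideanSpace ℝ (Fin 2)))
    (hB : ∀ p ∈ B, p ∈ J.extremePoints ℝ ∧ p + d ∈ J.extremePoints ℝ) : B.card ≤ 2 := by
  by_contra! hcard
  obtain ⟨p, hp, q, hq, r, hr, hpq, hpr, hqr⟩ := Finset.two_lt_card.1 hcard
  have key : ∀ x ∈ B, ∀ y ∈ B, ∀ z ∈ B, planeDet d x < planeDet d y →
      planeDet d y < planeDet d z → False := fun x hx y hy z hz h1 h2 =>
    not_three_ordered_chords hJ hd (hB x hx).1.1 (hB x hx).2.1 (hB y hy).1 (hB y hy).2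
      (hB z hz).1.1 (hB z hz).2.1 h1 h2
  have inj : ∀ x ∈ B, ∀ y ∈ B, x ≠ y → planeDet d x ≠ planeDet d y := fun x hx y hy hxy h =>
    hxy (planeDet_injOn_chords hd (hB x hx).1 (hB x hx).2 (hB y hy).1.1 (hB y hy).2.1 h)
  rcases (inj p hp q hq hpq).lt_or_gt with h1 | h1 <;>
  rcases (inj p hp r hr hpr).lt_or_gt with h2 | h2 <;>
  rcases (inj q hq r hr hqr).lt_or_gt with h3 | h3
  · exact key p hp q hq r hr h1 h3
  · exact key p hp r hr q hq h2 h3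
  · linarith
  · exact key r hr p hp q hq h2 h1
  · exact key q hq p hp r hr h1 h2
  · linarith
  · exact key q hq r hr p hp h3 h2
  · exact key r hr q hq p hp h3 h1

/-- On a chord from the left to the right of `x`, some point lies exactly above (or below) `x`. -/
theorem exists_mem_vertical {J : Set (EuclideanSpace ℝ (Fin 2))} (hJ : Convex ℝ J)
    {x y z : EuclideanSpace ℝ (Fin 2)} (hy : y ∈ J) (hz : z ∈ J)
    (hy0 : y 0 < x 0) (hz0 : x 0 < z 0) :
    ∃ a b : ℝ, 0 < a ∧ 0 < b ∧ a + b = 1 ∧ a • y + b • z ∈ J ∧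
      (a • y + b • z) 0 = x 0 := by
  have h : 0 < z 0 - y 0 := by linarith
  have hab : (z 0 - x 0) / (z 0 - y 0) + (x 0 - y 0) / (z 0 - y 0) = 1 := by field_simp; ring
  have ha : 0 < (z 0 - x 0) / (z 0 - y 0) := div_pos (by linarith) h
  have hb : 0 < (x 0 - y 0) / (z 0 - y 0) := div_pos (by linarith) h
  refine ⟨_, _, ha, hb, hab, hJ hy hz ha.le hb.le hab, ?_⟩
  simp
  field_simp
  ring

/-- An extreme point does not see points of the convex set in all four open quadrants. -/
theorem not_four_quadrants {J : Set (EuclideanSpace ℝ (Fin 2))} (hJ : Convex ℝ J)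
    {p ne nw se sw : EuclideanSpace ℝ (Fin 2)} (hp : p ∈ J.extremePoints ℝ)
    (hne : ne ∈ J) (hnw : nw ∈ J) (hse : se ∈ J) (hsw : sw ∈ J)
    (hne0 : p 0 < ne 0) (hne1 : p 1 < ne 1) (hnw0 : nw 0 < p 0) (hnw1 : p 1 < nw 1)
    (hse0 : p 0 < se 0) (hse1 : se 1 < p 1) (hsw0 : sw 0 < p 0) (hsw1 : sw 1 < p 1) : False := by
  obtain ⟨a, b, ha, hb, hab, hU, hU0⟩ := exists_mem_vertical hJ hnw hne hnw0 hne0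
  obtain ⟨c, e, hc, he, hce, hD, hD0⟩ := exists_mem_vertical hJ hsw hse hsw0 hse0
  have hU1 : p 1 < (a • nw + b • ne) 1 := by
    have : p 1 = a * p 1 + b * p 1 := by rw [← add_mul, hab, one_mul]
    rw [this]
    simp only [PiLp.add_apply, PiLp.smul_apply, smul_eq_mul]
    gcongr
  have hD1 : (c • sw + e • se) 1 < p 1 := by
    have : p 1 = c * p 1 + e * p 1 := by rw [← add_mul, hce, one_mul]
    rw [this]
    simp only [PiLp.add_apply, PiLp.smul_apply, smul_eq_mul]
    gcongr
  generalize a • nw + b • ne = u at *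
  generalize c • sw + e • se = v at *
  have huv : u = p := by
    refine eq_of_mem_extremePoints_of_combo hp hU hD (sub_pos.2 hD1) (sub_pos.2 hU1) ?_
    ext i
    fin_cases i
    · simp [hU0, hD0]; ring
    · simp; ring
  rw [huv] at hU1
  exact lt_irrefl _ hU1

/-- Relative to any grid, each extreme point of a convex set has a quadrant of boxes
that the convex set does not meet. -/
theorem exists_empty_quadrant {J : Set (EuclideanSpace ℝ (Fin 2))} (hJ : Convex ℝ J)
    {L : ℝ} (hL : 0 < L) {p : EuclideanSpace ℝ (Fin 2)} (hp : p ∈ J.extremePoints ℝ) :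
    ∃ σ : ℤˣ × ℤˣ, ∀ q ∈ J,
      ¬ (0 < (σ.1 : ℤ) * (⌊q 0 / L⌋ - ⌊p 0 / L⌋) ∧ 0 < (σ.2 : ℤ) * (⌊q 1 / L⌋ - ⌊p 1 / L⌋)) := by
  by_contra! h
  have lt_of_floor : ∀ x y : ℝ, ⌊x / L⌋ < ⌊y / L⌋ → x < y := fun x y hxy => by
    by_contra! hyx
    exact absurd (Int.floor_le_floor (by gcongr : y / L ≤ x / L)) (not_le.2 hxy)
  obtain ⟨ne, hne, hne0, hne1⟩ := h (1, 1)
  obtain ⟨nw, hnw, hnw0, hnw1⟩ := h (-1, 1)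
  obtain ⟨se, hse, hse0, hse1⟩ := h (1, -1)
  obtain ⟨sw, hsw, hsw0, hsw1⟩ := h (-1, -1)
  push_cast at *
  refine not_four_quadrants hJ hp hne hnw hse hsw ?_ ?_ ?_ ?_ ?_ ?_ ?_ ?_ <;>
    exact lt_of_floor _ _ (by linarith)

/-- The number of extreme lattice points of a convex set in a square of side `2 * M` is at most
`16 * M / L` plus a constant depending on `L` only. -/
theorem card_extreme_lattice_le {J : Set (EuclideanSpace ℝ (Fin 2))} (hJ : Convex ℝ J)
    (A : Finset (EuclideanSpace ℝ (Fin 2))) (hA : ∀ p ∈ A, p ∈ J.extremePoints ℝ)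
    (hlat : ∀ p ∈ A, IsLatticePt p) {M : ℝ} (hM0 : 0 ≤ M) (hM : ∀ p ∈ A, ∀ i, |p i| ≤ M)
    {L : ℕ} (hL : 0 < L) :
    (A.card : ℝ) ≤ 16 * M / L + (28 + 2 * (2 * L + 1) ^ 2) := by
  classical
  have hL' : (0 : ℝ) < L := by exact_mod_cast hL
  have hex : ∀ p : EuclideanSpace ℝ (Fin 2), ∃ σ : ℤˣ × ℤˣ, p ∈ A → ∀ q ∈ J,
      ¬ (0 < (σ.1 : ℤ) * (⌊q 0 / L⌋ - ⌊p 0 / L⌋) ∧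
        0 < (σ.2 : ℤ) * (⌊q 1 / L⌋ - ⌊p 1 / L⌋)) := fun p => by
    by_cases hp : p ∈ A
    · obtain ⟨σ, hσ⟩ := exists_empty_quadrant hJ hL' (hA p hp)
      exact ⟨σ, fun _ => hσ⟩
    · exact ⟨1, fun h => absurd h hp⟩
  choose σ hσ using hex
  let g : EuclideanSpace ℝ (Fin 2) → (ℤˣ × ℤˣ) × ℤ := fun p =>
    (σ p, ((σ p).1 : ℤ) * ⌊p 0 / L⌋ - ((σ p).2 : ℤ) * ⌊p 1 / L⌋)
  -- points with the same key lie in the same box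
  have hbox : ∀ p ∈ A, ∀ q ∈ A, g p = g q → ∀ i, ⌊p i / L⌋ = ⌊q i / L⌋ := by
    intro p hp q hq hpq
    have h1 : σ p = σ q := congrArg Prod.fst hpq
    have h2 := congrArg Prod.snd hpq
    simp only [g, h1] at h2
    have hp' := hσ p hp q (hA q hq).1
    have hq' := hσ q hq p (hA p hp).1
    rw [h1] at hp'
    have e0 : ⌊p 0 / L⌋ = ⌊q 0 / L⌋ ∧ ⌊p 1 / L⌋ = ⌊q 1 / L⌋ := by
      rcases Int.units_eq_one_or (σ q).1 with s | s <;>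
      rcases Int.units_eq_one_or (σ q).2 with t | t <;>
      simp only [s, t, Units.val_one, Units.val_neg] at h2 hp' hq' <;> omega
    intro i
    fin_cases i
    · exact e0.1
    · exact e0.2
  have hclose : ∀ p ∈ A, ∀ q ∈ A, g p = g q → ∀ i, |p i - q i| < L := by
    intro p hp q hq hpq i
    have h := Int.abs_sub_lt_one_of_floor_eq_floor (hbox p hp q hq hpq i)
    rwa [← sub_div, abs_div, abs_of_pos hL', div_lt_one hL'] at h
  -- a representative for each key
  have hrep : ∀ k : (ℤˣ × ℤˣ) × ℤ, ∃ r, k ∈ A.image g → r ∈ A ∧ g r = k := fun k => by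
    by_cases hk : k ∈ A.image g
    · obtain ⟨r, hr, hrk⟩ := Finset.mem_image.1 hk
      exact ⟨r, fun _ => ⟨hr, hrk⟩⟩
    · exact ⟨0, fun h => absurd h hk⟩
  choose r hr using hrep
  have hr' : ∀ p ∈ A, r (g p) ∈ A ∧ g (r (g p)) = g p := fun p hp =>
    hr _ (Finset.mem_image_of_mem g hp)
  set K : ℕ := ⌈2 * M / L + 2⌉₊ with hK
  have hK1 : 2 * M / L + 2 ≤ (K : ℝ) := Nat.le_ceil _
  have hK2 : (K : ℝ) < 2 * M / L + 2 + 1 := Nat.ceil_lt_add_one (by positivity)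
  -- representatives
  have hcard1 : (A.filter fun p => r (g p) = p).card ≤ 4 * (2 * K + 1) := by
    have hle : (A.filter fun p => r (g p) = p).card ≤
        ((Finset.univ : Finset (ℤˣ × ℤˣ)) ×ˢ Finset.Icc (-(K : ℤ)) K).card := by
      refine Finset.card_le_card_of_injOn g ?_ ?_
      · intro p hp
        have hpA := (Finset.mem_filter.1 hp).1
        have hfl : ∀ i, |(⌊p i / L⌋ : ℝ)| ≤ M / L + 1 := by
          intro i
          have h1 := abs_le.1 (hM p hpA i)
          have h2 : p i / L ≤ M / L := by gcongr; exact h1.2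
          have h3 : -(M / L) ≤ p i / L := by rw [← neg_div]; gcongr; exact h1.1
          have h4 := Int.floor_le (p i / L)
          have h5 := Int.lt_floor_add_one (p i / L)
          rw [abs_le]; constructor <;> linarith
        have h0 := abs_le.1 (hfl 0)
        have h1 := abs_le.1 (hfl 1)
        have h2 : 2 * M / L + 2 = (M / L + 1) + (M / L + 1) := by ring
        simp only [Finset.coe_product, Set.mem_prod, Finset.coe_univ, Set.mem_univ, true_and,
          Finset.coe_Icc, Set.mem_Icc, g]
        rify
        rcases Int.units_eq_one_or (σ p).1 with s | s <;>
        rcases Int.units_eq_one_or (σ p).2 with t | t <;>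
        simp only [s, t, Units.val_one, Units.val_neg, Int.cast_one, Int.cast_neg] <;>
        constructor <;> linarith
      · intro p hp q hq hpq
        rw [← (Finset.mem_filter.1 hp).2, ← (Finset.mem_filter.1 hq).2, hpq]
    refine hle.trans (le_of_eq ?_)
    rw [Finset.card_product, Int.card_Icc, Finset.card_univ, Fintype.card_prod,
      Fintype.card_units_int]
    omega
  -- the other points
  have hcard2 : (A.filter fun p => ¬ r (g p) = p).card ≤ 2 * (2 * L + 1) ^ 2 := by
    let f : EuclideanSpace ℝ (Fin 2) → ℤ × ℤ := fun p =>
      (⌊p 0 - r (g p) 0⌋, ⌊p 1 - r (g p) 1⌋)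
    have hf : ∀ p ∈ A, (p 0 - r (g p) 0 = (f p).1) ∧ (p 1 - r (g p) 1 = (f p).2) := by
      intro p hp
      have hint : ∀ i, p i - r (g p) i = (⌊p i - r (g p) i⌋ : ℤ) := fun i => by
        obtain ⟨m, hm⟩ := hlat p hp i
        obtain ⟨k, hk⟩ := hlat _ (hr' p hp).1 i
        rw [hm, hk, ← Int.cast_sub, Int.floor_intCast]
      exact ⟨hint 0, hint 1⟩
    have hle := Finset.card_le_mul_card_image_of_maps_to (f := f)
      (s := A.filter fun p => ¬ r (g p) = p)
      (t := Finset.Icc (-(L : ℤ)) L ×ˢ Finset.Icc (-(L : ℤ)) L) ?_ 2 ?_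
    · refine hle.trans (le_of_eq ?_)
      rw [Finset.card_product, Int.card_Icc, sq]
      have : ((L : ℤ) + 1 - -(L : ℤ)).toNat = 2 * L + 1 := by omega
      rw [this]
    · intro p hp
      have hpA := (Finset.mem_filter.1 hp).1
      have hc := hclose p hpA _ (hr' p hpA).1 (hr' p hpA).2.symm
      have h0 := abs_lt.1 (hc 0)
      have h1 := abs_lt.1 (hc 1)
      rw [(hf p hpA).1] at h0
      rw [(hf p hpA).2] at h1
      simp only [Finset.mem_product, Finset.mem_Icc]
      rify
      exact ⟨⟨h0.1.le, h0.2.le⟩, ⟨h1.1.le, h1.2.le⟩⟩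
    · intro v _
      set B := (A.filter fun p => ¬ r (g p) = p).filter fun p => f p = v with hB
      rcases B.eq_empty_or_nonempty with hBe | ⟨b, hb⟩
      · simp [hBe]
      have hdiff : ∀ p ∈ B, p = r (g p) + !₂[(v.1 : ℝ), (v.2 : ℝ)] := by
        intro p hp
        obtain ⟨hp1, hp2⟩ := Finset.mem_filter.1 hp
        have h := hf p (Finset.mem_filter.1 hp1).1
        rw [hp2] at h
        ext i
        fin_cases i
        · simp; linarith [h.1]
        · simp; linarith [h.2]
      have hd : -(!₂[(v.1 : ℝ), (v.2 : ℝ)] : EuclideanSpace ℝ (Fin 2)) ≠ 0 := by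
        intro h0
        have h1 := hdiff b hb
        rw [neg_eq_zero.1 h0, add_zero] at h1
        exact (Finset.mem_filter.1 (Finset.mem_filter.1 hb).1).2 h1.symm
      refine card_chords_le_two hJ hd B fun p hp => ?_
      have hpA := (Finset.mem_filter.1 (Finset.mem_filter.1 hp).1).1
      refine ⟨hA p hpA, ?_⟩
      have h1 : p + -!₂[(v.1 : ℝ), (v.2 : ℝ)] = r (g p) := by
        rw [← sub_eq_add_neg, sub_eq_iff_eq_add]; exact hdiff p hp
      rw [h1]
      exact hA _ (hr' p hpA).1
  have hsum := Finset.card_filter_add_card_filter_not (s := A) (fun p => r (g p) = p)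
  have hN : A.card ≤ 4 * (2 * K + 1) + 2 * (2 * L + 1) ^ 2 := by omega
  have hN' : (A.card : ℝ) ≤ 4 * (2 * K + 1) + 2 * (2 * L + 1) ^ 2 := by exact_mod_cast hN
  have : 16 * M / L = 8 * (2 * M / L) := by ring
  linarith

theorem stmt12 (V : ℕ → Set (EuclideanSpace ℝ (Fin 2)))
    (hVfin : ∀ n, (V n).Finite) (hVlat : ∀ n, ∀ v ∈ V n, IsLatticePt v)
    (J : ℕ → Set (EuclideanSpace ℝ (Fin 2))) (hJ : ∀ n, J n = convexHull ℝ (V n))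
    (hp : Tendsto (fun n => per (J n)) atTop atTop)
    (O : Set (EuclideanSpace ℝ (Fin 2)))
    (hOc : IsCompact O) (hOconv : Convex ℝ O) (hOint : (interior O).Nonempty)
    (hconv : Tendsto (fun n => hausdorffDist ((per (J n))⁻¹ • J n) O) atTop (𝓝 0)) :
    -- the number of faces (= vertices) of the polygon `J n` is negligible w.r.t. its perimeter
    Tendsto (fun n => ((Set.extremePoints ℝ (J n)).ncard : ℝ) / per (J n)) atTop (𝓝 0) := by
  have hOne : O.Nonempty := hOint.mono interior_subset
  obtain ⟨R₀, hR₀⟩ := hOc.isBounded.exists_norm_le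
  obtain ⟨o, ho⟩ := hOne
  have hR₀0 : 0 ≤ R₀ := (norm_nonneg o).trans (hR₀ o ho)
  set R := R₀ + 1 with hR
  have hcvx : ∀ n, Convex ℝ (J n) := fun n => hJ n ▸ convex_convexHull ℝ _
  have hsub : ∀ n, (J n).extremePoints ℝ ⊆ V n := fun n => by
    rw [hJ n]; exact extremePoints_convexHull_subset
  -- eventually `J n` is contained in the ball of radius `R * per (J n)`
  have hbound : ∀ᶠ n in atTop, ∀ x ∈ J n, ‖x‖ ≤ R * per (J n) := by
    filter_upwards [hconv.eventually_lt_const one_pos, hp.eventually_gt_atTop 0] with n hn hpn x hx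
    have hbdd : Bornology.IsBounded ((per (J n))⁻¹ • J n) := by
      rw [hJ n]
      exact ((isBounded_convexHull.2 (hVfin n).isBounded)).smul₀ _
    have hmem : (per (J n))⁻¹ • x ∈ (per (J n))⁻¹ • J n := smul_mem_smul_set hx
    obtain ⟨y, hy, hxy⟩ := exists_dist_lt_of_hausdorffDist_lt hmem hn
      (hausdorffEDist_ne_top_of_nonempty_of_bounded ⟨_, hmem⟩ ⟨o, ho⟩ hbdd hOc.isBounded)
    have h1 : ‖(per (J n))⁻¹ • x‖ ≤ R := by
      have := norm_le_norm_add_norm_sub' ((per (J n))⁻¹ • x) y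
      rw [dist_eq_norm] at hxy
      linarith [hR₀ y hy]
    rw [norm_smul, norm_inv, Real.norm_of_nonneg hpn.le, inv_mul_le_iff₀ hpn] at h1
    linarith
  rw [Metric.tendsto_nhds]
  intro ε hε
  obtain ⟨L, hL⟩ := exists_nat_gt (32 * R / ε)
  have hL0 : (0 : ℝ) < L := lt_of_le_of_lt (by positivity) hL
  have hLε : 16 * R / L < ε / 2 := by
    rw [div_lt_iff₀ hε] at hL
    rw [div_lt_iff₀ hL0]
    linarith
  filter_upwards [hbound, hp.eventually_gt_atTop 0,
    hp.eventually_gt_atTop ((28 + 2 * (2 * (L : ℝ) + 1) ^ 2) / (ε / 2))] with n hn hpn hpn'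
  have hfin : ((J n).extremePoints ℝ).Finite := (hVfin n).subset (hsub n)
  have hcard := card_extreme_lattice_le (hcvx n) hfin.toFinset (fun p h => by simpa using h)
    (fun p h => hVlat n p (hsub n (by simpa using h)))
    (M := R * per (J n)) (by positivity)
    (fun p h i => (PiLp.norm_apply_le p i).trans
      (hn p (extremePoints_subset (by simpa using h))))
    (L := L) (by exact_mod_cast hL0)
  rw [← Set.ncard_eq_toFinset_card _ hfin] at hcard
  rw [dist_zero_right, Real.norm_of_nonneg (by positivity), div_lt_iff₀ hpn]
  rw [div_lt_iff₀ (by positivity)] at hpn'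
  have h2 : 16 * (R * per (J n)) / L = 16 * R / L * per (J n) := by ring
  have h3 := mul_lt_mul_of_pos_right hLε hpn
  linarith
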